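/- Let (X,Σ,m) be a σ-finite measure space, B a separable Banach space, E a Banach B-bundle over X, and p ∈ (1,∞). Then for every ε ∈ (0,2], the following upper bound holds: δ_{Γ_p(E)}(ε) ≤ ess inf_{x ∈ X} δ_{E(x)}(ε), where δ_{Γ_p(E)} is the modulus of convexity of the Banach space Γ_p(E) and δ_{E(x)} that of the fiber E(x). -/

import Mathlib

open MeasureTheory
open scoped ENNReal

/-- A *Banach `B`-bundle* over a measurable space `X`: a weakly measurable multivalued map
whose values are closed linear subspaces of `B`. -/
structure BanachBundle (X : Type*) [MeasurableSpace X]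
    (B : Type*) [NormedAddCommGroup B] [NormedSpace ℝ B] where
  fiber : X → Submodule ℝ B
  isClosed_fiber : ∀ x, IsClosed (fiber x : Set B)
  weaklyMeasurable : ∀ U : Set B, IsOpen U →
    MeasurableSet {x | ((fiber x : Set B) ∩ U).Nonempty}

/-- The space `Γ_p(E)` of `L^p`-sections of a Banach bundle `E`, realized as the subspace of
`L^p(m;B)` of elements whose representatives take values in the fibers `m`-a.e. -/
noncomputable def BanachBundle.sections {X B : Type*} [MeasurableSpace X]
    [NormedAddCommGroup B] [NormedSpace ℝ B]
    (m : Measure X) (p : ℝ≥0∞) [Fact (1 ≤ p)] (E : BanachBundle X B) :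
    Submodule ℝ (Lp B p m) where
  carrier := {f | ∀ᵐ x ∂m, (f : X → B) x ∈ E.fiber x}
  zero_mem' := by
    filter_upwards [Lp.coeFn_zero B p m] with x hx
    show (((0 : Lp B p m) : X → B)) x ∈ E.fiber x
    rw [hx]
    exact (E.fiber x).zero_mem
  add_mem' := by
    intro f g hf hg
    filter_upwards [hf, hg, Lp.coeFn_add f g] with x h1 h2 h3
    show (((f + g : Lp B p m) : X → B)) x ∈ E.fiber x
    rw [h3]
    exact (E.fiber x).add_mem h1 h2
  smul_mem' := by
    intro c f hf
    filter_upwards [hf, Lp.coeFn_smul c f] with x h1 h2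
    show (((c • f : Lp B p m) : X → B)) x ∈ E.fiber x
    rw [h2]
    exact (E.fiber x).smul_mem c h1

/-- The modulus of convexity of a normed space `V`. -/
noncomputable def modulusOfConvexity (V : Type*) [NormedAddCommGroup V] [Module ℝ V]
    (ε : ℝ) : ℝ :=
  sInf {r : ℝ | ∃ v w : V, ‖v‖ = 1 ∧ ‖w‖ = 1 ∧ ε ≤ ‖v - w‖ ∧ r = 1 - ‖(2 : ℝ)⁻¹ • (v + w)‖}

/-- The modulus of convexity of a subset `S` (a fiber of a bundle), with the convention that
the infimum over the empty family equals `1`. -/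
noncomputable def fiberModulus {B : Type*} [NormedAddCommGroup B] (S : Set B) (ε : ℝ) : ℝ :=
  sInf (insert 1 {r : ℝ | ∃ v ∈ S, ∃ w ∈ S,
    ‖v‖ = 1 ∧ ‖w‖ = 1 ∧ ε ≤ ‖v - w‖ ∧ r = 1 - ‖v + w‖ / 2})

/-- A closed-valued multifunction into the Baire space whose hitting sets of closed sets are
measurable has a measurable selection. -/
theorem exists_measurable_selection_baire {X : Type*} [MeasurableSpace X]
    (G : X → Set (ℕ → ℕ)) (hG : ∀ x, IsClosed (G x))
    (hmeas : ∀ D : Set (ℕ → ℕ), IsClosed D → MeasurableSet {x | (G x ∩ D).Nonempty}) :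
    ∃ σ : X → ℕ → ℕ, Measurable σ ∧ ∀ x, (G x).Nonempty → σ x ∈ G x := by
  classical
  let q : (X → Set (ℕ → ℕ)) → ℕ → X → ℕ → Prop := fun L k x j =>
    (L x ∩ {z | z k = j}).Nonempty ∨ ∀ i, ¬ (L x ∩ {z | z k = i}).Nonempty
  have hq : ∀ L k x, ∃ j, q L k x j := by
    intro L k x
    by_cases h : ∃ j, (L x ∩ {z | z k = j}).Nonempty
    · exact ⟨h.choose, Or.inl h.choose_spec⟩
    · exact ⟨0, Or.inr (not_exists.1 h)⟩
  let L : ℕ → X → Set (ℕ → ℕ) := fun k => Nat.rec G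
    (fun k L x => L x ∩ {z | z k = Nat.find (hq L k x)}) k
  let σ : X → ℕ → ℕ := fun x k => Nat.find (hq (L k) k x)
  have hLsucc : ∀ k x, L (k + 1) x = L k x ∩ {z | z k = σ x k} := fun k x => rfl
  have hclosed : ∀ k j : ℕ, IsClosed {z : ℕ → ℕ | z k = j} := fun k j =>
    isClosed_eq (continuous_apply k) continuous_const
  have hσ : ∀ k, (∀ D : Set (ℕ → ℕ), IsClosed D → MeasurableSet {x | (L k x ∩ D).Nonempty}) →
      Measurable fun x => σ x k := by
    intro k hk
    refine measurable_find (hq (L k) k) fun j => ?_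
    have h1 := fun j => hk _ (hclosed k j)
    have h2 : {x | ∀ i, ¬ (L k x ∩ {z | z k = i}).Nonempty} =
        ⋂ i, {x | (L k x ∩ {z | z k = i}).Nonempty}ᶜ := by ext x; simp
    have h3 : MeasurableSet {x | ∀ i, ¬ (L k x ∩ {z | z k = i}).Nonempty} :=
      h2 ▸ MeasurableSet.iInter fun i => (h1 i).compl
    exact (h1 j).union h3
  have hL : ∀ k, ∀ D : Set (ℕ → ℕ), IsClosed D → MeasurableSet {x | (L k x ∩ D).Nonempty} := by
    intro k
    induction k with
    | zero => exact hmeas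
    | succ k ih =>
      intro D hD
      have : {x | (L (k + 1) x ∩ D).Nonempty} =
          ⋃ j, (fun x => σ x k) ⁻¹' {j} ∩ {x | (L k x ∩ ({z | z k = j} ∩ D)).Nonempty} := by
        ext x
        simp [hLsucc, Set.inter_assoc]
      rw [this]
      exact MeasurableSet.iUnion fun j =>
        ((hσ k ih) (measurableSet_singleton j)).inter (ih _ ((hclosed k j).inter hD))
  refine ⟨σ, measurable_pi_iff.2 fun k => hσ k (hL k), fun x hx => ?_⟩
  have hne : ∀ k, (L k x).Nonempty := by
    intro k
    induction k with
    | zero => exact hx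
    | succ k ih =>
      obtain ⟨z, hz⟩ := ih
      rcases Nat.find_spec (hq (L k) k x) with h | h
      · exact h
      · exact absurd ⟨z, hz, rfl⟩ (h (z k))
  have hsub : ∀ k, ∀ z ∈ L k x, z ∈ G x ∧ ∀ i < k, z i = σ x i := by
    intro k
    induction k with
    | zero => exact fun z hz => ⟨hz, by simp⟩
    | succ k ih =>
      rintro z ⟨hz, hzk⟩
      refine ⟨(ih z hz).1, fun i hi => ?_⟩
      rcases Nat.lt_succ_iff_lt_or_eq.1 hi with h | rfl
      · exact (ih z hz).2 i h
      · exact hzk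
  choose z hz using hne
  refine (hG x).mem_of_tendsto (f := z) (b := Filter.atTop) ?_
    (Filter.Eventually.of_forall fun k => (hsub k _ (hz k)).1)
  refine tendsto_pi_nhds.2 fun i => tendsto_const_nhds.congr' ?_
  filter_upwards [Filter.eventually_gt_atTop i] with k hk
  exact ((hsub k _ (hz k)).2 i hk).symm

/-- An open set containing `∏ i, [0, n i]` in the Baire space contains a cylinder over a finite
part of this product. -/
theorem exists_cylinder_subset_of_isOpen (n : ℕ → ℕ) {W : Set (ℕ → ℕ)} (hW : IsOpen W)
    (hK : {z : ℕ → ℕ | ∀ i, z i ≤ n i} ⊆ W) :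
    ∃ k, {z : ℕ → ℕ | ∀ i < k, z i ≤ n i} ⊆ W := by
  by_contra! h
  choose z hz hzW using fun k => Set.not_subset.1 (h k)
  have hcomp : IsCompact {z : ℕ → ℕ | ∀ i, z i ≤ n i} := by
    have : {z : ℕ → ℕ | ∀ i, z i ≤ n i} = Set.pi Set.univ fun i => Set.Iic (n i) := by
      ext; simp [Pi.le_def]
    exact this ▸ isCompact_univ_pi fun i => (Set.finite_Iic (n i)).isCompact
  obtain ⟨a, ha, φ, hφ, hlim⟩ := hcomp.tendsto_subseq (x := fun k i => min (z k i) (n i))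
    (fun k i => min_le_right _ _)
  have hlim' : Filter.Tendsto (z ∘ φ) Filter.atTop (nhds a) := by
    refine tendsto_pi_nhds.2 fun i => (tendsto_pi_nhds.1 hlim i).congr' ?_
    filter_upwards [hφ.tendsto_atTop.eventually_gt_atTop i] with k hk
    exact min_eq_left (hz (φ k) i hk)
  exact hW.isClosed_compl.mem_of_tendsto hlim' (Filter.Eventually.of_forall fun k => hzW _) (hK ha)

theorem measurableSet_filter_mem {X : Type*} [MeasurableSpace X] {A : ℕ → Set X}
    (hA : ∀ n, MeasurableSet (A n)) (k : ℕ) (R : Set ℕ → Prop) :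
    MeasurableSet {x | R {n | n < k ∧ x ∈ A n}} := by
  classical
  let f : X → Finset ℕ := fun x => (Finset.range k).filter fun n => x ∈ A n
  have hf : @Measurable _ _ _ ⊤ f := by
    let _ : MeasurableSpace (Finset ℕ) := ⊤
    refine measurable_to_countable' fun s => ?_
    have : f ⁻¹' {s} = ⋂ n, {x | (n < k ∧ x ∈ A n) ↔ n ∈ s} := by
      ext x
      simp [f, Finset.ext_iff]
    rw [this]
    refine MeasurableSet.iInter fun n => measurableSet_setOfPred.2 ?_
    exact (measurable_const.and (measurableSet_setOfPred.1 (hA n))).iff measurable_const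
  have : {x | R {n | n < k ∧ x ∈ A n}} = f ⁻¹' {s | R (s : Set ℕ)} := by
    ext x
    simp [f]
  rw [this]
  exact hf trivial

/-- Selection on a set of positive measure for a closed-valued multifunction into the Baire
space whose graph has complement `⋃ n, A n ×ˢ V n`. -/
theorem exists_partial_selection_baire {X : Type*} [MeasurableSpace X] (μ : Measure X)
    [IsFiniteMeasure μ] {A : ℕ → Set X} (hA : ∀ n, MeasurableSet (A n))
    {V : ℕ → Set (ℕ → ℕ)} (hV : ∀ n, IsOpen (V n))
    (h : μ {x | ∃ z, ∀ n, x ∈ A n → z ∉ V n} ≠ 0) :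
    ∃ P : Set X, MeasurableSet P ∧ μ P ≠ 0 ∧ ∃ σ : X → ℕ → ℕ, Measurable σ ∧
      ∀ x ∈ P, ∀ n, x ∈ A n → σ x ∉ V n := by
  let F : X → Set (ℕ → ℕ) := fun x => {z | ∀ n, x ∈ A n → z ∉ V n}
  have hF : ∀ x, IsClosed (F x) := by
    intro x
    have : F x = ⋂ n, ⋂ _ : x ∈ A n, (V n)ᶜ := by ext; simp [F]
    rw [this]
    exact isClosed_iInter fun n => isClosed_iInter fun _ => (hV n).isClosed_compl
  let W : ℕ → X → Set (ℕ → ℕ) := fun k x => ⋃ n ∈ {n | n < k ∧ x ∈ A n}, V n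
  have hWo : ∀ k x, IsOpen (W k x) := fun k x => isOpen_biUnion fun n _ => hV n
  have hWmono : ∀ x, Monotone fun k => W k x := fun x k l hkl =>
    Set.biUnion_subset_biUnion_left fun n hn => ⟨hn.1.trans_le hkl, hn.2⟩
  have hWF : ∀ k x z, z ∈ F x → z ∉ W k x := by
    intro k x z hz hW
    obtain ⟨n, hn, hzn⟩ := Set.mem_iUnion₂.1 hW
    exact hz n hn.2 hzn
  have hcover : ∀ x (K : Set (ℕ → ℕ)), IsCompact K → ¬ (F x ∩ K).Nonempty → ∃ k, K ⊆ W k x := by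
    intro x K hK hne
    refine hK.elim_directed_cover _ (fun k => hWo k x) (fun z hz => ?_)
      (hWmono x).directed_le
    by_contra hzW
    refine hne ⟨z, fun n hn hzn => hzW ?_, hz⟩
    exact Set.mem_iUnion.2 ⟨n + 1, Set.mem_iUnion₂.2 ⟨n, ⟨n.lt_succ_self, hn⟩, hzn⟩⟩
  have hKmeas : ∀ K : Set (ℕ → ℕ), IsCompact K → MeasurableSet {x | (F x ∩ K).Nonempty} := by
    intro K hK
    have : {x | (F x ∩ K).Nonempty} = ⋂ k, {x | ¬ K ⊆ W k x} := by
      ext x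
      simp only [Set.mem_ofPred_eq, Set.mem_iInter]
      refine ⟨fun ⟨z, hz, hzK⟩ k hsub => hWF k x z hz (hsub hzK), fun hx => ?_⟩
      by_contra hne
      obtain ⟨k, hk⟩ := hcover x K hK hne
      exact hx k hk
    rw [this]
    exact MeasurableSet.iInter fun k =>
      measurableSet_filter_mem hA k fun s => ¬ K ⊆ ⋃ n ∈ s, V n
  obtain ⟨c, hc0, hc⟩ := exists_between (pos_iff_ne_zero.2 h)
  have hstep : ∀ (k : ℕ) (T : {T : Set (ℕ → ℕ) // c < μ {x | (F x ∩ T).Nonempty}}),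
      ∃ j, c < μ {x | (F x ∩ (T.1 ∩ {z | z k ≤ j})).Nonempty} := by
    rintro k ⟨T, hT⟩
    have hU : {x | (F x ∩ T).Nonempty} = ⋃ j, {x | (F x ∩ (T ∩ {z | z k ≤ j})).Nonempty} := by
      ext x
      simp only [Set.mem_ofPred_eq, Set.mem_iUnion]
      exact ⟨fun ⟨z, hz, hzT⟩ => ⟨z k, z, hz, hzT, le_refl (z k)⟩,
        fun ⟨_, z, hz, hzT, _⟩ => ⟨z, hz, hzT⟩⟩
    have hmono : Monotone fun j => {x | (F x ∩ (T ∩ {z | z k ≤ j})).Nonempty} := by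
      rintro i j hij x ⟨z, hz, hzT, hzk⟩
      exact ⟨z, hz, hzT, hzk.trans hij⟩
    rw [hU, hmono.measure_iUnion] at hT
    exact lt_iSup_iff.1 hT
  choose j hj using hstep
  let T : ℕ → {T : Set (ℕ → ℕ) // c < μ {x | (F x ∩ T).Nonempty}} := fun k => Nat.rec
    ⟨Set.univ, by simp only [Set.inter_univ]; exact hc⟩
    (fun k T => ⟨T.1 ∩ {z | z k ≤ j k T}, hj k T⟩) k
  let n : ℕ → ℕ := fun k => j k (T k)
  have hT : ∀ k, (T k).1 = {z | ∀ i < k, z i ≤ n i} := by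
    intro k
    induction k with
    | zero => simp [T]
    | succ k ih =>
      have : (T (k + 1)).1 = (T k).1 ∩ {z | z k ≤ n k} := rfl
      rw [this, ih]
      ext z
      exact Nat.forall_lt_succ_right.symm
  let K : Set (ℕ → ℕ) := {z | ∀ i, z i ≤ n i}
  have hK : IsCompact K := by
    have : K = Set.pi Set.univ fun i => Set.Iic (n i) := by ext; simp [K, Pi.le_def]
    exact this ▸ isCompact_univ_pi fun i => (Set.finite_Iic (n i)).isCompact
  let Q : ℕ → Set X := fun k => {x | ¬ (T k).1 ⊆ W k x}
  have hTanti : Antitone fun k => (T k).1 := by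
    intro k l hkl
    simp only [hT]
    exact fun z hz i hi => hz i (hi.trans_le hkl)
  have hQanti : Antitone Q := fun k l hkl x hx hsub =>
    hx ((hTanti hkl).trans (hsub.trans (hWmono x hkl)))
  have hQmeas : ∀ k, MeasurableSet (Q k) := fun k =>
    measurableSet_filter_mem hA k fun s => ¬ (T k).1 ⊆ ⋃ n ∈ s, V n
  have hQc : ∀ k, c ≤ μ (Q k) := fun k => (T k).2.le.trans (measure_mono
    fun x ⟨z, hz, hzT⟩ hsub => hWF k x z hz (hsub hzT))
  have hQK : ⋂ k, Q k ⊆ {x | (F x ∩ K).Nonempty} := by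
    intro x hx
    by_contra hne
    obtain ⟨k, hk⟩ := hcover x K hK hne
    obtain ⟨l, hl⟩ := exists_cylinder_subset_of_isOpen n (hWo k x) hk
    refine Set.mem_iInter.1 hx (max k l) ((hTanti (le_max_right k l)).trans ?_)
    exact (hT l ▸ hl).trans (hWmono x (le_max_left k l))
  obtain ⟨σ, hσ, hσF⟩ := exists_measurable_selection_baire (fun x => F x ∩ K)
    (fun x => (hF x).inter hK.isClosed)
    (fun D hD => by simpa only [Set.inter_assoc] using hKmeas _ (hK.inter_right hD))
  refine ⟨{x | (F x ∩ K).Nonempty}, hKmeas K hK, ?_, σ, hσ, fun x hx => (hσF x hx).1⟩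
  refine (hc0.trans_le (le_trans ?_ (measure_mono hQK))).ne'
  rw [hQanti.measure_iInter (fun k => (hQmeas k).nullMeasurableSet) ⟨0, measure_ne_top _ _⟩]
  exact le_iInf hQc

/-- Selection on a set of positive measure for a closed-valued multifunction into a Polish space
whose graph has complement a countable union of rectangles `A i ×ˢ V i`. -/
theorem exists_partial_selection {X Y ι : Type*} [MeasurableSpace X] [TopologicalSpace Y]
    [PolishSpace Y] [MeasurableSpace Y] [BorelSpace Y] [Countable ι] [Nonempty ι]
    (μ : Measure X) [SigmaFinite μ] {A : ι → Set X} (hA : ∀ i, MeasurableSet (A i))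
    {V : ι → Set Y} (hV : ∀ i, IsOpen (V i))
    (h : μ {x | ∃ y, ∀ i, x ∈ A i → y ∉ V i} ≠ 0) :
    ∃ P : Set X, MeasurableSet P ∧ μ P ≠ 0 ∧ μ P ≠ ∞ ∧ ∃ g : X → Y, Measurable g ∧
      ∀ x ∈ P, ∀ i, x ∈ A i → g x ∉ V i := by
  obtain ⟨S, hS⟩ : ∃ k, μ ({x | ∃ y, ∀ i, x ∈ A i → y ∉ V i} ∩ spanningSets μ k) ≠ 0 := by
    by_contra! hzero
    refine h ?_
    rw [← Set.inter_univ {x | _}, ← iUnion_spanningSets μ, Set.inter_iUnion]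
    exact measure_iUnion_null hzero
  have hSm := measurableSet_spanningSets μ S
  have hSfin := measure_spanningSets_lt_top μ S
  have : IsFiniteMeasure (μ.restrict (spanningSets μ S)) := ⟨by simpa using hSfin⟩
  have : Nonempty Y := by
    obtain ⟨x, ⟨y, -⟩, -⟩ := nonempty_of_measure_ne_zero hS
    exact ⟨y⟩
  obtain ⟨φ, hφ, hφs⟩ := PolishSpace.exists_nat_nat_continuous_surjective Y
  obtain ⟨e, he⟩ := exists_surjective_nat ι
  obtain ⟨P, hP, hP0, σ, hσ, hσP⟩ := exists_partial_selection_baire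
    (μ.restrict (spanningSets μ S)) (A := fun n => A (e n)) (fun n => hA _)
    (V := fun n => φ ⁻¹' V (e n)) (fun n => (hV _).preimage hφ) (by
      rw [Measure.restrict_apply' hSm]
      convert hS using 4
      ext x
      simp only [hφs.exists, he.forall, Set.mem_preimage])
  rw [Measure.restrict_apply hP] at hP0
  exact ⟨P ∩ spanningSets μ S, hP.inter hSm, hP0,
    ((measure_mono Set.inter_subset_right).trans_lt hSfin).ne, fun x => φ (σ x),
    hφ.measurable.comp hσ, fun x hx => he.forall.2 fun n => hσP x hx.1 n⟩

theorem modulusOfConvexity_le_of_mem {V : Type*} [NormedAddCommGroup V] [NormedSpace ℝ V]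
    {ε : ℝ} {v w : V} (hv : ‖v‖ = 1) (hw : ‖w‖ = 1) (hvw : ε ≤ ‖v - w‖) :
    modulusOfConvexity V ε ≤ 1 - ‖(2 : ℝ)⁻¹ • (v + w)‖ := by
  refine csInf_le ⟨0, ?_⟩ ⟨v, w, hv, hw, hvw, rfl⟩
  rintro r ⟨v, w, hv, hw, -, rfl⟩
  rw [norm_smul, Real.norm_of_nonneg (by norm_num)]
  linarith [norm_add_le v w]

theorem modulusOfConvexity_le_one (V : Type*) [NormedAddCommGroup V] [NormedSpace ℝ V] (ε : ℝ) :
    modulusOfConvexity V ε ≤ 1 := by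
  by_cases h : ∃ v w : V, ‖v‖ = 1 ∧ ‖w‖ = 1 ∧ ε ≤ ‖v - w‖
  · obtain ⟨v, w, hv, hw, hvw⟩ := h
    linarith [modulusOfConvexity_le_of_mem hv hw hvw, norm_nonneg ((2 : ℝ)⁻¹ • (v + w))]
  · refine le_of_eq_of_le ?_ zero_le_one
    rw [modulusOfConvexity, ← Real.sInf_empty]
    congr 1
    refine Set.eq_empty_of_forall_notMem ?_
    rintro r ⟨v, w, hv, hw, hvw, -⟩
    exact h ⟨v, w, hv, hw, hvw⟩

theorem fiberModulus_le_one {B : Type*} [NormedAddCommGroup B] (S : Set B) (ε : ℝ) :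
    fiberModulus S ε ≤ 1 := by
  refine csInf_le ⟨0, ?_⟩ (Set.mem_insert _ _)
  rintro r (rfl | ⟨v, -, w, -, hv, hw, -, rfl⟩)
  · exact zero_le_one
  · linarith [norm_add_le v w]

/-- Fields of unit vectors in the fibers over a set of positive finite measure bound the modulus
of convexity of the space of sections. -/
theorem BanachBundle.modulusOfConvexity_sections_le {X B : Type*} [MeasurableSpace X]
    [NormedAddCommGroup B] [NormedSpace ℝ B] {m : Measure X} (E : BanachBundle X B)
    {p : ℝ≥0∞} [Fact (1 ≤ p)] (hp : p ≠ ∞) {P : Set X} (hP : MeasurableSet P)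
    (hP0 : m P ≠ 0) (hPfin : m P ≠ ∞) {v w : X → B}
    (hvm : StronglyMeasurable v) (hwm : StronglyMeasurable w) {ε s : ℝ} (hε : 0 ≤ ε) (hs : 0 ≤ s)
    (hv : ∀ x ∈ P, v x ∈ E.fiber x) (hw : ∀ x ∈ P, w x ∈ E.fiber x)
    (hv1 : ∀ x ∈ P, ‖v x‖ = 1) (hw1 : ∀ x ∈ P, ‖w x‖ = 1)
    (hvw : ∀ x ∈ P, ε ≤ ‖v x - w x‖) (hsum : ∀ x ∈ P, s ≤ ‖v x + w x‖ / 2) :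
    modulusOfConvexity (E.sections m p) ε ≤ 1 - s := by
  classical
  have hp0 : p ≠ 0 := (zero_lt_one.trans_le Fact.out).ne'
  have hr : 0 < m.real P ^ (1 / p.toReal) :=
    Real.rpow_pos_of_pos (ENNReal.toReal_pos hP0 hPfin) _
  let c : ℝ := (m.real P ^ (1 / p.toReal))⁻¹
  have hc : 0 < c := inv_pos.2 hr
  let u : Lp ℝ p m := indicatorConstLp p hP hPfin c
  have hu : ‖u‖ = 1 := by
    rw [norm_indicatorConstLp hp0 hp, Real.norm_of_nonneg hc.le]
    exact inv_mul_cancel₀ hr.ne'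
  have hux : ∀ᵐ x ∂m, u x = P.indicator (fun _ => c) x := indicatorConstLp_coeFn
  have key : ∀ y : X → B, StronglyMeasurable y → (∀ x ∈ P, y x ∈ E.fiber x) →
      (∀ x ∈ P, ‖y x‖ = 1) → ∃ f : E.sections m p, ‖f‖ = 1 ∧
        ∀ᵐ x ∂m, (f : Lp B p m) x = P.indicator (fun x => c • y x) x := by
    intro y hym hy hy1
    have hnorm : ∀ x, ‖P.indicator (fun x => c • y x) x‖ = ‖P.indicator (fun _ => c) x‖ := by
      intro x
      by_cases hx : x ∈ P
      · simp [hx, norm_smul, hy1 x hx]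
      · simp [hx]
    have hmem : MemLp (P.indicator fun x => c • y x) p m :=
      (memLp_indicator_const p hP c (Or.inr hPfin)).of_le
        ((hym.const_smul c).indicator hP).aestronglyMeasurable
        (Filter.Eventually.of_forall fun x => (hnorm x).le)
    have hco := hmem.coeFn_toLp
    refine ⟨⟨hmem.toLp _, ?_⟩, ?_, hco⟩
    · show ∀ᵐ x ∂m, _
      filter_upwards [hco] with x hx
      rw [hx]
      by_cases hxP : x ∈ P
      · simpa [hxP] using (E.fiber x).smul_mem c (hy x hxP)
      · simp [hxP]
    · rw [← hu]
      show ‖hmem.toLp _‖ = ‖u‖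
      refine le_antisymm (Lp.norm_le_norm_of_ae_le ?_) (Lp.norm_le_norm_of_ae_le ?_) <;>
      · filter_upwards [hco, hux] with x hx hx'
        rw [hx, hx', hnorm]
  have lower : ∀ (g : Lp B p m) (y : X → B) (t : ℝ), 0 ≤ t → (∀ x ∈ P, t ≤ ‖y x‖) →
      (∀ᵐ x ∂m, g x = P.indicator (fun x => c • y x) x) → t ≤ ‖g‖ := by
    intro g y t ht hty hg
    have : ‖t • u‖ ≤ ‖g‖ := by
      refine Lp.norm_le_norm_of_ae_le ?_
      filter_upwards [hg, hux, Lp.coeFn_smul t u] with x hx hx' hx''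
      rw [hx, hx'', Pi.smul_apply, hx']
      by_cases hxP : x ∈ P
      · simp only [hxP, Set.indicator_of_mem, norm_smul, Real.norm_of_nonneg ht,
          Real.norm_of_nonneg hc.le]
        rw [mul_comm]
        exact mul_le_mul_of_nonneg_left (hty x hxP) hc.le
      · simp [hxP]
    rwa [norm_smul, hu, mul_one, Real.norm_of_nonneg ht] at this
  obtain ⟨f, hf1, hf⟩ := key v hvm hv hv1
  obtain ⟨g, hg1, hg⟩ := key w hwm hw hw1
  have hfg : ε ≤ ‖f - g‖ := by
    refine lower (f - g : Lp B p m) (fun x => v x - w x) ε hε hvw ?_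
    filter_upwards [hf, hg, Lp.coeFn_sub (f : Lp B p m) g] with x h1 h2 h3
    rw [h3, Pi.sub_apply, h1, h2]
    by_cases hxP : x ∈ P <;> simp [hxP, smul_sub]
  have hfgs : s ≤ ‖(2 : ℝ)⁻¹ • (f + g)‖ := by
    refine lower ((2 : ℝ)⁻¹ • (f + g) : Lp B p m) (fun x => (2 : ℝ)⁻¹ • (v x + w x)) s hs ?_ ?_
    · intro x hx
      rw [norm_smul, Real.norm_of_nonneg (by norm_num), inv_mul_eq_div]
      exact hsum x hx
    · filter_upwards [hf, hg, Lp.coeFn_add (f : Lp B p m) g,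
        Lp.coeFn_smul (2 : ℝ)⁻¹ (f + g : Lp B p m)] with x h1 h2 h3 h4
      rw [h4, Pi.smul_apply, h3, Pi.add_apply, h1, h2]
      by_cases hxP : x ∈ P
      · simp only [hxP, Set.indicator_of_mem]
        rw [← smul_add, smul_comm]
      · simp [hxP]
  linarith [modulusOfConvexity_le_of_mem hf1 hg1 hfg]

/-- If, on a non-negligible set, the fibers contain a pair of vectors in a closed set `C`, then
such pairs can be chosen measurably on a set of positive finite measure. -/
theorem BanachBundle.exists_partial_selection_pair {X B : Type*} [MeasurableSpace X]
    [NormedAddCommGroup B] [NormedSpace ℝ B] [CompleteSpace B]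
    [TopologicalSpace.SeparableSpace B] (m : Measure X) [SigmaFinite m] (E : BanachBundle X B)
    {C : Set (B × B)} (hC : IsClosed C)
    (h : m {x | ∃ y ∈ C, y.1 ∈ E.fiber x ∧ y.2 ∈ E.fiber x} ≠ 0) :
    ∃ P : Set X, MeasurableSet P ∧ m P ≠ 0 ∧ m P ≠ ∞ ∧ ∃ v w : X → B,
      StronglyMeasurable v ∧ StronglyMeasurable w ∧
      ∀ x ∈ P, (v x, w x) ∈ C ∧ v x ∈ E.fiber x ∧ w x ∈ E.fiber x := by
  borelize B
  have := UniformSpace.secondCountable_of_separable B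
  let b := TopologicalSpace.countableBasis B
  have hbase := TopologicalSpace.isBasis_countableBasis B
  have hbo : ∀ U : b, IsOpen (U : Set B) := fun U => hbase.isOpen U.2
  let miss : Set B → Set X := fun U => {x | ((E.fiber x : Set B) ∩ U).Nonempty}ᶜ
  let A : Option (b ⊕ b) → Set X := fun i =>
    i.elim Set.univ (Sum.elim (fun U => miss U) fun U => miss U)
  let V : Option (b ⊕ b) → Set (B × B) := fun i =>
    i.elim Cᶜ (Sum.elim (fun U => Prod.fst ⁻¹' (U : Set B)) fun U => Prod.snd ⁻¹' (U : Set B))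
  have hmiss : ∀ x v, v ∈ E.fiber x ↔ ∀ U : b, x ∈ miss U → v ∉ (U : Set B) := by
    intro x v
    refine ⟨fun hv U hx hvU => hx ⟨v, hv, hvU⟩, fun hU => ?_⟩
    by_contra hv
    obtain ⟨U, hUb, hvU, hsub⟩ :=
      hbase.exists_subset_of_mem_open (u := (E.fiber x : Set B)ᶜ) hv
        (E.isClosed_fiber x).isOpen_compl
    exact hU ⟨U, hUb⟩ (fun ⟨z, hz, hzU⟩ => hsub hzU hz) hvU
  have hAV : ∀ x (y : B × B), (∀ i, x ∈ A i → y ∉ V i) ↔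
      y ∈ C ∧ y.1 ∈ E.fiber x ∧ y.2 ∈ E.fiber x := by
    intro x y
    rw [hmiss, hmiss, Option.forall, Sum.forall]
    simp [A, V]
  have hA : ∀ i, MeasurableSet (A i) := by
    rintro (_ | U | U)
    · exact MeasurableSet.univ
    · exact (E.weaklyMeasurable _ (hbo U)).compl
    · exact (E.weaklyMeasurable _ (hbo U)).compl
  have hV : ∀ i, IsOpen (V i) := by
    rintro (_ | U | U)
    · exact hC.isOpen_compl
    · exact (hbo U).preimage continuous_fst
    · exact (hbo U).preimage continuous_snd
  obtain ⟨P, hP, hP0, hPfin, g, hg, hgP⟩ :=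
    exists_partial_selection m hA hV (by simpa only [hAV] using h)
  exact ⟨P, hP, hP0, hPfin, fun x => (g x).1, fun x => (g x).2, hg.fst.stronglyMeasurable,
    hg.snd.stronglyMeasurable, fun x hx => (hAV x (g x)).1 (hgP x hx)⟩

/-- The modulus of convexity of the section space `Γ_p(E)` is bounded above by the essential
infimum of the moduli of convexity of the fibers. -/
theorem modulus_sections_le_essInf_fiber_modulus
    {X B : Type*} [MeasurableSpace X] (m : Measure X) [SigmaFinite m]
    [NormedAddCommGroup B] [NormedSpace ℝ B] [CompleteSpace B]
    [TopologicalSpace.SeparableSpace B]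
    (E : BanachBundle X B)
    (p : ℝ≥0∞) [Fact (1 ≤ p)] (hp : 1 < p) (hp' : p ≠ ∞)
    (ε : ℝ) (hε : ε ∈ Set.Ioc (0 : ℝ) 2) :
    modulusOfConvexity ↥(E.sections m p) ε ≤
      essInf (fun x => fiberModulus (E.fiber x : Set B) ε) m := by
  rcases eq_zero_or_neZero m with rfl | hm
  · have hsec : Subsingleton (E.sections (0 : Measure X) p) := by
      refine ⟨fun f g => Subtype.ext (Lp.ext ?_)⟩
      rw [Filter.EventuallyEq, ae_zero]
      exact Filter.eventually_bot
    simp [modulusOfConvexity, essInf, Filter.liminf, Filter.limsInf]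
  set D := modulusOfConvexity (E.sections m p) ε with hD
  have hD1 : D ≤ 1 := modulusOfConvexity_le_one _ _
  have hcob : Filter.IsCoboundedUnder (· ≥ ·) (ae m)
      fun x => fiberModulus (E.fiber x : Set B) ε :=
    Filter.IsBoundedUnder.isCoboundedUnder_ge
      ⟨1, Filter.eventually_map.2 (Filter.Eventually.of_forall fun x => fiberModulus_le_one _ _)⟩
  refine Filter.le_liminf_of_le hcob ?_
  let C : ℕ → Set (B × B) := fun k => {y | ‖y.1‖ = 1 ∧ ‖y.2‖ = 1 ∧ ε ≤ ‖y.1 - y.2‖ ∧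
    1 - D + 1 / ((k : ℝ) + 1) ≤ ‖y.1 + y.2‖ / 2}
  have hC : ∀ k, IsClosed (C k) := by
    intro k
    refine IsClosed.and (isClosed_eq ?_ ?_) (IsClosed.and (isClosed_eq ?_ ?_)
      (IsClosed.and (isClosed_le ?_ ?_) (isClosed_le ?_ ?_))) <;> fun_prop
  have hnull : ∀ k, ∀ᵐ x ∂m, ¬ ∃ y ∈ C k, y.1 ∈ E.fiber x ∧ y.2 ∈ E.fiber x := by
    intro k
    by_contra hk
    have hk' : m {x | ∃ y ∈ C k, y.1 ∈ E.fiber x ∧ y.2 ∈ E.fiber x} ≠ 0 := by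
      simpa only [ae_iff, not_not] using hk
    obtain ⟨P, hP, hP0, hPfin, v, w, hv, hw, h⟩ := E.exists_partial_selection_pair m (hC k) hk'
    have hpos : 0 < 1 / ((k : ℝ) + 1) := Nat.one_div_pos_of_nat
    have := E.modulusOfConvexity_sections_le hp' hP hP0 hPfin hv hw hε.1.le
      (s := 1 - D + 1 / ((k : ℝ) + 1)) (by linarith) (fun x hx => (h x hx).2.1)
      (fun x hx => (h x hx).2.2) (fun x hx => (h x hx).1.1) (fun x hx => (h x hx).1.2.1)
      (fun x hx => (h x hx).1.2.2.1) (fun x hx => (h x hx).1.2.2.2)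
    linarith
  filter_upwards [ae_all_iff.2 hnull] with x hx
  refine le_csInf (Set.insert_nonempty _ _) ?_
  rintro r (rfl | ⟨v, hv, w, hw, hv1, hw1, hvw, rfl⟩)
  · exact hD1
  · by_contra! hlt
    obtain ⟨k, hk⟩ := exists_nat_one_div_lt (sub_pos.2 hlt)
    exact hx k ⟨(v, w), ⟨hv1, hw1, hvw, by dsimp only; linarith⟩, hv, hw⟩
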